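/- Let H be an autostackable group, and let G be a group containing H as a subgroup of finite index. Then G is autostackable respecting H. -/

import Mathlib

/-!
Let `N_H`, `φ_H` be an autostackable structure for `H` over the alphabet `A`, and choose a right
transversal `{1} ∪ {t_q : q ∈ T}` of `H` in `G` with `T` finite.  Over the alphabet
`A ⊔ {t_q} ⊔ {t_q⁻¹}`, the normal forms for `G` are `N_H ∪ ⋃ N_H t_q`.  Every element of `G` has a
standard word, a word over `A` followed by at most one letter `t_q`.  The stacking function is
`φ_H` on `N_H × A`; it sends `(u, t_q)` to `t_q` and `(u, t_q⁻¹)` to a standard word for `t_q⁻¹`;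
it sends `(u t_q, a)` to `t_q⁻¹` followed by a standard word for `t_q a`, unless `a = t_q⁻¹`, which
is kept.

Outside `N_H × A` this function depends only on the last letter of the normal form and
on `a`, so it is invariant under translation by `H` and takes finitely many values.  For
termination, `t_q⁻¹` read at `u t_q` is degenerate and leads back into `H`, and a standard word
read at an element of `H` stays in `H` until its last letter `t_r`, which is degenerate there.  So
after one step an infinite rewriting sequence runs inside `N_H × A`, where it contradicts the
termination of `φ_H` (`ext_F3`).

The graph of the stacking function is the union of the relabelled graph of `φ_H` and finitely many
sets `L × {a} × {w}` with `L` regular, and such sets are synchronously regular (`reg_pad`).  All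
closure properties of regular languages are obtained by counting left quotients.
-/

/-- Evaluation of a word over an alphabet `α` in a monoid `G` via a letter map `π`. -/
def wordVal {G : Type} [Monoid G] {α : Type} (π : α → G) (w : List α) : G :=
  (w.map π).prod

/-- A language is prefix-closed if it contains every prefix of each of its words. -/
def PrefixClosed {α : Type} (N : Set (List α)) : Prop :=
  ∀ w ∈ N, ∀ p : List α, p <+: w → p ∈ N

/-- `(α, π, inv)` is a finite inverse-closed generating set for the group `G`:
no letter represents the identity, `inv` is an involution with `π (inv a) = (π a)⁻¹`,
and the letters generate `G`. -/
structure IsInvGenSet (G : Type) [Group G] {α : Type} (π : α → G) (inv : α → α) : Prop where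
  ne_one : ∀ a, π a ≠ 1
  inv_invol : ∀ a, inv (inv a) = a
  val_inv : ∀ a, π (inv a) = (π a)⁻¹
  gen : Subgroup.closure (Set.range π) = ⊤

/-- A language over `α` is regular if it is accepted by a finite state automaton. -/
def IsRegularLang {α : Type} (L : Set (List α)) : Prop :=
  ∃ (σ : Type) (_ : Fintype σ) (M : DFA α σ), M.accepts = L

/-- The padded word over `(α ∪ {$})²` corresponding to a pair of words;
`none` plays the role of the padding symbol `$`. -/
def padWord2 {α : Type} (p : List α × List α) : List (Option α × Option α) :=
  (List.range (max p.1.length p.2.length)).map (fun i => (p.1[i]?, p.2[i]?))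

/-- Synchronous regularity of a set of pairs of words. -/
def SyncRegular2 {α : Type} (L : Set (List α × List α)) : Prop :=
  IsRegularLang (padWord2 '' L)

/-- The padded word over `(α ∪ {$})³` corresponding to a triple of words. -/
def padWord3 {α : Type} (p : List α × List α × List α) :
    List (Option α × Option α × Option α) :=
  (List.range (max p.1.length (max p.2.1.length p.2.2.length))).map
    (fun i => (p.1[i]?, p.2.1[i]?, p.2.2[i]?))

/-- Synchronous regularity of a set of triples of words. -/
def SyncRegular3 {α : Type} (L : Set (List α × List α × List α)) : Prop :=
  IsRegularLang (padWord3 '' L)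

structure StackingData (α : Type) where
  N : Set (List α)
  K : ℕ
  phi : List α → α → List α

/-- `st` is a stackable structure for `G` over the finite inverse-closed generating
set `(α, π, inv)`. -/
structure IsStacking (G : Type) [Group G] {α : Type} (π : α → G) (inv : α → α)
    (st : StackingData α) : Prop where
  gen : IsInvGenSet G π inv
  nf : ∀ g : G, ∃! w, w ∈ st.N ∧ wordVal π w = g
  prefixClosed : PrefixClosed st.N
  F1 : ∀ y ∈ st.N, ∀ a : α, wordVal π (st.phi y a) = π a ∧ (st.phi y a).length ≤ st.K
  F2 : ∀ y ∈ st.N, ∀ a : α, (y ++ [a] ∈ st.N ∨ ∃ y', y = y' ++ [inv a]) → st.phi y a = [a]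
  F3 : ¬ ∃ seq : ℕ → List α × α,
      ∀ i : ℕ, (seq i).1 ∈ st.N ∧ (seq i).1 ++ [(seq i).2] ∉ st.N ∧
        (¬ ∃ y', (seq i).1 = y' ++ [inv (seq i).2]) ∧
        ∃ u u' : List α, st.phi (seq i).1 (seq i).2 = u ++ (seq (i+1)).2 :: u' ∧
          (seq (i+1)).1 ∈ st.N ∧
          wordVal π ((seq (i+1)).1) = wordVal π ((seq i).1 ++ u)

/-- The regularity conditions making a stackable structure autostackable:
the set of normal forms is regular and the graph of the stacking function is
synchronously regular. -/
def StackingData.IsAuto {α : Type} (st : StackingData α) : Prop :=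
  IsRegularLang st.N ∧
  SyncRegular3 {t : List α × List α × List α | ∃ y ∈ st.N, ∃ a : α, t = (y, [a], st.phi y a)}

/-- The stacking structure `st` respects the subgroup `H`. -/
def RespectsSubgroup {G : Type} [Group G] {α : Type} (π : α → G) (inv : α → α)
    (st : StackingData α) (H : Subgroup G) : Prop :=
  ∃ B : Set α,
    (∀ b ∈ B, inv b ∈ B) ∧
    (∀ b ∈ B, π b ∈ H) ∧
    Subgroup.closure (π '' B) = H ∧
    ∃ NH NTr : Set (List α),
      (∀ w ∈ NH, ∀ b ∈ w, b ∈ B) ∧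
      PrefixClosed NH ∧
      (∀ h : G, h ∈ H → ∃! w, w ∈ NH ∧ wordVal π w = h) ∧
      PrefixClosed NTr ∧
      (∀ g : G, ∃! w, w ∈ NTr ∧ wordVal π w * g⁻¹ ∈ H) ∧
      st.N = {w | ∃ u ∈ NH, ∃ v ∈ NTr, w = u ++ v} ∧
      (∀ y ∈ st.N, wordVal π y ∈ H → ∀ b ∈ B, ∀ c ∈ st.phi y b, c ∈ B) ∧
      (∀ a : α, ∀ y ∈ st.N, ∀ y' ∈ st.N,
        ¬(wordVal π y ∈ H ∧ a ∈ B) →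
        (∃ h ∈ H, wordVal π y' = h * wordVal π y) → st.phi y' a = st.phi y a)

/-- A group is autostackable if it admits an autostackable structure over some
finite inverse-closed generating set. -/
def Autostackable (G : Type) [Group G] : Prop :=
  ∃ (α : Type) (_ : Fintype α) (π : α → G) (inv : α → α) (st : StackingData α),
    IsStacking G π inv st ∧ st.IsAuto

/-- A group is stackable if it admits a stackable structure over some
finite inverse-closed generating set. -/
def Stackable (G : Type) [Group G] : Prop :=
  ∃ (α : Type) (_ : Fintype α) (π : α → G) (inv : α → α) (st : StackingData α),
    IsStacking G π inv st

/-- `G` is autostackable respecting the subgroup `H`. -/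
def AutostackableRespecting (G : Type) [Group G] (H : Subgroup G) : Prop :=
  ∃ (α : Type) (_ : Fintype α) (π : α → G) (inv : α → α) (st : StackingData α),
    IsStacking G π inv st ∧ st.IsAuto ∧ RespectsSubgroup π inv st H

/-- `G` is stackable respecting the subgroup `H`. -/
def StackableRespecting (G : Type) [Group G] (H : Subgroup G) : Prop :=
  ∃ (α : Type) (_ : Fintype α) (π : α → G) (inv : α → α) (st : StackingData α),
    IsStacking G π inv st ∧ RespectsSubgroup π inv st H

/-! ### Regular languages -/

theorem reg_iff {α : Type} (L : Set (List α)) :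
    IsRegularLang L ↔ (Set.range fun x : List α => {y | x ++ y ∈ L}).Finite :=
  Language.isRegular_iff_finite_range_leftQuotient (L := (L : Language α))

theorem reg_union {α : Type} {L M : Set (List α)} (hL : IsRegularLang L) (hM : IsRegularLang M) :
    IsRegularLang (L ∪ M) :=
  Language.IsRegular.add (L1 := (L : Language α)) (L2 := (M : Language α)) hL hM

theorem reg_empty {α : Type} : IsRegularLang (∅ : Set (List α)) := by
  rw [reg_iff]
  refine (Set.finite_singleton (∅ : Set (List α))).subset ?_
  rintro _ ⟨x, rfl⟩
  simp

theorem reg_nil {α : Type} : IsRegularLang ({[]} : Set (List α)) := by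
  rw [reg_iff]
  refine (Set.toFinite {(∅ : Set (List α)), {[]}}).subset ?_
  rintro _ ⟨x, rfl⟩
  by_cases h : x = []
  · right; ext y; simp [h]
  · left; ext y; simp [h]

theorem reg_iUnion {α ι : Type} [Finite ι] (L : ι → Set (List α))
    (h : ∀ i, IsRegularLang (L i)) : IsRegularLang (⋃ i, L i) := by
  have : ∀ s : Set ι, s.Finite → IsRegularLang (⋃ i ∈ s, L i) := by
    intro s hs
    induction s, hs using Set.Finite.induction_on with
    | empty => simpa using reg_empty
    | insert _ _ ih => rw [Set.biUnion_insert]; exact reg_union (h _) ih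
  simpa using this Set.univ Set.finite_univ

theorem reg_deriv {α : Type} {L : Set (List α)} (h : IsRegularLang L) (c : α) :
    IsRegularLang {z | c :: z ∈ L} := by
  rw [reg_iff] at h ⊢
  refine h.subset ?_
  rintro _ ⟨x, rfl⟩
  exact ⟨c :: x, rfl⟩

/-- Regularity can be checked after removing one leading letter, because a left quotient is
either the language itself or a left quotient of one of its derivatives. -/
theorem reg_of_deriv {α : Type} [Finite α] {L : Set (List α)}
    (h : ∀ c, IsRegularLang {z | c :: z ∈ L}) : IsRegularLang L := by
  simp only [reg_iff] at h
  rw [reg_iff]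
  refine ((Set.finite_singleton L).union (Set.finite_iUnion h)).subset ?_
  rintro _ ⟨x, rfl⟩
  cases x with
  | nil => left; rfl
  | cons c x => right; exact Set.mem_iUnion.2 ⟨c, x, rfl⟩

theorem reg_map {α β : Type} (f : α → β) (hf : Function.Injective f) {L : Set (List α)}
    (h : IsRegularLang L) : IsRegularLang (List.map f '' L) := by
  rw [reg_iff] at h ⊢
  refine ((Set.finite_singleton ∅).union (h.image (fun M => List.map f '' M))).subset ?_
  rintro _ ⟨x, rfl⟩
  by_cases hx : ∃ x', x = List.map f x'
  · obtain ⟨x', rfl⟩ := hx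
    right
    refine ⟨_, ⟨x', rfl⟩, ?_⟩
    ext y
    constructor
    · rintro ⟨z, hz, rfl⟩
      exact ⟨x' ++ z, hz, by simp⟩
    · rintro ⟨w, hw, e⟩
      obtain ⟨w1, w2, rfl, e1, e2⟩ := List.map_eq_append_iff.1 e
      rw [List.map_injective_iff.2 hf e1] at hw
      exact ⟨w2, hw, e2⟩
  · left
    rw [Set.mem_singleton_iff, Set.eq_empty_iff_forall_notMem]
    rintro y ⟨w, hw, e⟩
    obtain ⟨w1, w2, rfl, e1, e2⟩ := List.map_eq_append_iff.1 e
    exact hx ⟨w1, e1.symm⟩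

theorem reg_snoc {α : Type} (c : α) {L : Set (List α)}
    (h : IsRegularLang L) : IsRegularLang ((fun w => w ++ [c]) '' L) := by
  rw [reg_iff] at h ⊢
  refine (Set.Finite.image2 (fun (M E : Set (List α)) => (fun w => w ++ [c]) '' M ∪ E) h
    (Set.toFinite {(∅ : Set (List α)), {[]}})).subset ?_
  rintro _ ⟨x, rfl⟩
  -- A word `z` with `x ++ z ∈ L c` is either empty or ends in `c`.
  refine ⟨_, ⟨x, rfl⟩, {z | z = [] ∧ ∃ w ∈ L, w ++ [c] = x}, ?_, ?_⟩
  · by_cases hx : ∃ w ∈ L, w ++ [c] = x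
    · right; ext z; simpa using fun _ => hx
    · left; exact Set.eq_empty_iff_forall_notMem.2 fun z hz => hx hz.2
  · ext z
    rcases List.eq_nil_or_concat z with rfl | ⟨z, b, rfl⟩
    · simp
    · constructor
      · rintro (⟨w, hw, e⟩ | ⟨e, -⟩)
        · exact ⟨x ++ w, hw, by simpa using e⟩
        · simp at e
      · rintro ⟨w, hw, e⟩
        simp only [List.concat_eq_append, ← List.append_assoc] at e
        obtain ⟨rfl, e⟩ := List.append_inj' e rfl
        left
        exact ⟨z, hw, by simpa using e⟩

/-! ### Padded triples -/

theorem padWord3_cons {α : Type} (y v w : List α) (h : ¬(y = [] ∧ v = [] ∧ w = [])) :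
    padWord3 (y, v, w) =
      (y.head?, v.head?, w.head?) :: padWord3 (y.tail, v.tail, w.tail) := by
  have hl : max y.length (max v.length w.length) =
      max y.tail.length (max v.tail.length w.tail.length) + 1 := by
    simp only [← List.length_eq_zero_iff] at h
    simp only [List.length_tail]
    omega
  simp only [padWord3, hl, List.range_succ_eq_map, List.map_cons, List.map_map]
  simp [Function.comp_def, List.head?_eq_getElem?]

theorem padWord3_map {α β : Type} (f : α → β) (y v w : List α) :
    padWord3 (y.map f, v.map f, w.map f) =
      (padWord3 (y, v, w)).map (Prod.map (Option.map f) (Prod.map (Option.map f) (Option.map f))) := by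
  simp [padWord3]

theorem padWord3_left {α : Type} (y : List α) :
    padWord3 (y, [], []) = y.map (fun c => (some c, none, none)) := by
  induction y with
  | nil => rfl
  | cons c y ih => rw [padWord3_cons _ _ _ (by simp)]; simpa using ih

/-- Pairing a regular language with two fixed words gives a synchronously regular set; the
induction removes one column of the padded word at a time. -/
theorem reg_pad {α : Type} [Finite α] (n : ℕ) :
    ∀ (L : Set (List α)) (v w : List α), v.length ≤ n → w.length ≤ n → IsRegularLang L →
      IsRegularLang (padWord3 '' ((fun y => (y, v, w)) '' L)) := by
  have base : ∀ L : Set (List α), IsRegularLang L →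
      IsRegularLang (padWord3 '' ((fun y => (y, ([] : List α), ([] : List α))) '' L)) := by
    intro L hL
    rw [Set.image_image]
    simp only [padWord3_left]
    refine reg_map _ ?_ hL
    intro a b e
    simpa using e
  induction n with
  | zero =>
    intro L v w hv hw hL
    obtain rfl : v = [] := List.length_eq_zero_iff.1 (by omega)
    obtain rfl : w = [] := List.length_eq_zero_iff.1 (by omega)
    exact base L hL
  | succ n ih =>
    intro L v w hv hw hL
    by_cases hvw : v = [] ∧ w = []
    · obtain ⟨rfl, rfl⟩ := hvw
      exact base L hL
    have hne : ∀ y : List α, ¬(y = [] ∧ v = [] ∧ w = []) := fun y h => hvw h.2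
    apply reg_of_deriv
    rintro ⟨c1, c2, c3⟩
    by_cases hc : c2 = v.head? ∧ c3 = w.head?
    · obtain ⟨rfl, rfl⟩ := hc
      have hL' : IsRegularLang {z | ∃ y ∈ L, y.head? = c1 ∧ y.tail = z} := by
        cases c1 with
        | none =>
          by_cases hn : [] ∈ L
          · convert reg_nil (α := α) using 1
            ext z
            simp [hn, eq_comm]
          · convert reg_empty (α := α) using 1
            ext z
            simp [hn]
        | some a =>
          convert reg_deriv hL a using 1
          ext z
          constructor
          · rintro ⟨y, hy, h1, rfl⟩
            cases y with
            | nil => simp at h1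
            | cons b y => obtain rfl : b = a := by simpa using h1
                          exact hy
          · intro hz
            exact ⟨a :: z, hz, rfl, rfl⟩
      convert ih _ v.tail w.tail (by simp; omega) (by simp; omega) hL' using 1
      ext z
      constructor
      · rintro ⟨_, ⟨y, hy, rfl⟩, e⟩
        rw [padWord3_cons _ _ _ (hne y)] at e
        simp only [List.cons.injEq, Prod.mk.injEq, and_true] at e
        exact ⟨_, ⟨y.tail, ⟨y, hy, e.1, rfl⟩, rfl⟩, e.2⟩
      · rintro ⟨_, ⟨_, ⟨y, hy, rfl, rfl⟩, rfl⟩, rfl⟩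
        exact ⟨_, ⟨y, hy, rfl⟩, padWord3_cons _ _ _ (hne y)⟩
    · convert reg_empty using 1
      rw [Set.eq_empty_iff_forall_notMem]
      rintro z ⟨_, ⟨y, hy, rfl⟩, e⟩
      rw [padWord3_cons _ _ _ (hne y)] at e
      simp only [List.cons.injEq, Prod.mk.injEq] at e
      exact hc ⟨e.1.2.1.symm, e.1.2.2.symm⟩

/-! ### The extended alphabet and stacking function -/

/-- The letters of `H` together with a formal letter `t_q` (flag `true`) and a formal inverse
letter `t_q⁻¹` (flag `false`) for every `q : T`. Letters that agree in `G` are kept apart. -/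
abbrev ExtLetter (A T : Type) : Type := A ⊕ (T × Bool)

/-- The element of `G` represented by a letter; `τ` is the transversal, with `τ none` the
representative of `H` itself. -/
def extVal {G : Type} [Group G] {H : Subgroup G} {A T : Type} (π : A → H) (τ : Option T → G) :
    ExtLetter A T → G
  | .inl b => π b
  | .inr (q, true) => τ (some q)
  | .inr (q, false) => (τ (some q))⁻¹

/-- Formal inversion of letters. -/
def extInv {A T : Type} (inv : A → A) : ExtLetter A T → ExtLetter A T
  | .inl b => .inl (inv b)
  | .inr (q, s) => .inr (q, !s)

/-- The transversal as words: the empty word and the one-letter words `t_q`. -/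
def tailWord {A T : Type} : Option T → List (ExtLetter A T)
  | none => []
  | some q => [.inr (q, true)]

/-- The word `u` over the alphabet of `H` followed by a transversal word. -/
def stdWord {A T : Type} (u : List A) (r : Option T) : List (ExtLetter A T) :=
  u.map .inl ++ tailWord r

/-- The normal forms `N_H ∪ ⋃ N_H t_q`. -/
def extN {A : Type} (T : Type) (N : Set (List A)) : Set (List (ExtLetter A T)) :=
  {y | ∃ u ∈ N, ∃ r : Option T, y = stdWord u r}

/-- The stacking function: `W0 q` is its value at `t_q⁻¹` on elements of `H`, and `W1 q a` its
value at `a` on elements of the coset `H t_q`. -/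
def extPhi {A T : Type} (phi : List A → A → List A) (W0 : T → List (ExtLetter A T))
    (W1 : T → ExtLetter A T → List (ExtLetter A T)) (y : List (ExtLetter A T))
    (a : ExtLetter A T) : List (ExtLetter A T) :=
  match y.getLast? with
  | some (.inr (q, true)) => W1 q a
  | _ =>
    match a with
    | .inl b => (phi (y.filterMap Sum.getLeft?) b).map .inl
    | .inr (q, true) => [.inr (q, true)]
    | .inr (q, false) => W0 q

section
variable {A T : Type} (phi : List A → A → List A) (W0 : T → List (ExtLetter A T))
  (W1 : T → ExtLetter A T → List (ExtLetter A T))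

theorem extPhi_some (u : List A) (q : T) (a : ExtLetter A T) :
    extPhi phi W0 W1 (stdWord u (some q)) a = W1 q a := by
  simp [extPhi, stdWord, tailWord]

theorem extPhi_none (u : List A) (a : ExtLetter A T) :
    extPhi phi W0 W1 (stdWord u none) a =
      match a with
      | .inl b => (phi u b).map .inl
      | .inr (q, true) => [.inr (q, true)]
      | .inr (q, false) => W0 q := by
  have h : (List.map Sum.inl u : List (ExtLetter A T)).filterMap Sum.getLeft? = u := by
    induction u with
    | nil => rfl
    | cons c u ih => simp [ih]
  simp only [extPhi, stdWord, tailWord, List.append_nil, h]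
  rcases List.eq_nil_or_concat u with rfl | ⟨u, b, rfl⟩
  · simp
  · simp

end

theorem stdWord_inj {A T : Type} {u u' : List A} {r r' : Option T}
    (h : stdWord u r = stdWord u' r') : u = u' ∧ r = r' := by
  have key : ∀ (u : List A) (r : Option T),
      (stdWord u r).filterMap Sum.getLeft? = u ∧
      (stdWord u r).filterMap Sum.getRight? = (r.map fun q => (q, true)).toList := by
    intro u r
    induction u with
    | nil => cases r <;> simp [stdWord, tailWord]
    | cons c u ih =>
      simp only [stdWord, List.map_cons, List.cons_append] at ih ⊢
      constructor
      · rw [List.filterMap_cons_some (f := Sum.getLeft?) (b := c) rfl, ih.1]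
      · rw [List.filterMap_cons_none (f := Sum.getRight?) rfl, ih.2]
  have h1 := key u r
  rw [h, (key u' r').1, (key u' r').2] at h1
  refine ⟨h1.1.symm, ?_⟩
  cases r <;> cases r' <;> simp_all

theorem wordVal_append {G : Type} [Monoid G] {α : Type} (π : α → G) (u v : List α) :
    wordVal π (u ++ v) = wordVal π u * wordVal π v := by
  simp [wordVal]

theorem wordVal_singleton {G : Type} [Monoid G] {α : Type} (π : α → G) (a : α) :
    wordVal π [a] = π a := by
  simp [wordVal]

theorem wordVal_cons {G : Type} [Monoid G] {α : Type} (π : α → G) (a : α) (u : List α) :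
    wordVal π (a :: u) = π a * wordVal π u := by
  simp [wordVal]

theorem wordVal_lift {G : Type} [Group G] {H : Subgroup G} {A T : Type} (π : A → H)
    (τ : Option T → G) (u : List A) :
    wordVal (extVal π τ) (u.map .inl) = (wordVal π u : H) := by
  induction u with
  | nil => simp [wordVal]
  | cons c u ih => rw [List.map_cons, wordVal_cons, wordVal_cons, ih]; simp [extVal]

theorem wordVal_tail {G : Type} [Group G] {H : Subgroup G} {A T : Type} (π : A → H)
    (τ : Option T → G) (h1 : τ none = 1) (r : Option T) :
    wordVal (extVal π τ) (tailWord r) = τ r := by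
  cases r with
  | none => simp [wordVal, tailWord, h1]
  | some q => simp [wordVal, tailWord, extVal]

theorem wordVal_std {G : Type} [Group G] {H : Subgroup G} {A T : Type} (π : A → H)
    (τ : Option T → G) (h1 : τ none = 1) (u : List A) (r : Option T) :
    wordVal (extVal π τ) (stdWord u r) = (wordVal π u : H) * τ r := by
  rw [stdWord, wordVal_append, wordVal_lift, wordVal_tail π τ h1]

theorem exists_transversal {G : Type} [Group G] (H : Subgroup G) (hfi : H.FiniteIndex) :
    ∃ (T : Type) (_ : Fintype T) (τ : Option T → G), τ none = 1 ∧
      ∀ g, ∃! r, g * (τ r)⁻¹ ∈ H := by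
  classical
  have : Fintype (G ⧸ H) := Fintype.ofFinite _
  -- The right coset `Hg` is encoded as the left coset `g⁻¹H`.
  refine ⟨{q : G ⧸ H // q ≠ ((1 : G) : G ⧸ H)}, inferInstance,
    fun r => r.elim 1 (fun q => (q.1.out)⁻¹), rfl, ?_⟩
  intro g
  have e0 : (g ∈ H) ↔ ((g⁻¹ : G) : G ⧸ H) = ((1 : G) : G ⧸ H) := by
    rw [QuotientGroup.eq]; simp
  have e1 : ∀ q : G ⧸ H, g * q.out ∈ H ↔ ((g⁻¹ : G) : G ⧸ H) = q := by
    intro q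
    conv_rhs => rw [← QuotientGroup.out_eq' q, QuotientGroup.eq]
    simp
  by_cases hg : g ∈ H
  · refine ⟨none, by simpa using hg, ?_⟩
    rintro (_ | q) hq
    · rfl
    · simp only [Option.elim_some, inv_inv] at hq
      exact absurd ((e1 q.1).1 hq ▸ e0.1 hg) q.2
  · refine ⟨some ⟨((g⁻¹ : G) : G ⧸ H), fun h => hg (e0.2 h)⟩, ?_, ?_⟩
    · simp only [Option.elim_some, inv_inv]
      exact (e1 _).2 rfl
    · rintro (_ | q) hq
      · exact absurd (by simpa using hq) hg
      · simp only [Option.elim_some, inv_inv] at hq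
        congr 1
        exact Subtype.ext ((e1 q.1).1 hq).symm

/-! ### The stacking axioms for the extension -/

section Ext
variable {G : Type} [Group G] {H : Subgroup G} {A T : Type} {π : A → H} {inv : A → A}
  {st : StackingData A} {τ : Option T → G}

theorem tau_eq (hτ : ∀ g, ∃! r, g * (τ r)⁻¹ ∈ H) {x y : G} (hx : x ∈ H) (hy : y ∈ H)
    {r r' : Option T} (h : x * τ r = y * τ r') : r = r' := by
  refine (hτ (x * τ r)).unique ?_ ?_
  · simpa using hx
  · rw [h]; simpa using hy

theorem tau_notMem (h1 : τ none = 1) (hτ : ∀ g, ∃! r, g * (τ r)⁻¹ ∈ H) (q : T) :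
    τ (some q) ∉ H := by
  intro h
  have := tau_eq hτ (r := none) (r' := some q) h H.one_mem (by simp [h1])
  simp at this

theorem exists_std (hst : IsStacking H π inv st) (h1 : τ none = 1)
    (hτ : ∀ g, ∃! r, g * (τ r)⁻¹ ∈ H) (g : G) :
    ∃ p : List A × Option T, p.1 ∈ st.N ∧
      wordVal (extVal π τ) (stdWord p.1 p.2) = g := by
  obtain ⟨r, hr, -⟩ := hτ g
  obtain ⟨u, ⟨hu, e⟩, -⟩ := hst.nf ⟨_, hr⟩
  exact ⟨(u, r), hu, by simp [wordVal_std π τ h1, e]⟩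

theorem std_unique (hst : IsStacking H π inv st) (h1 : τ none = 1)
    (hτ : ∀ g, ∃! r, g * (τ r)⁻¹ ∈ H) {u u' : List A} (hu : u ∈ st.N) (hu' : u' ∈ st.N)
    {r r' : Option T}
    (h : wordVal (extVal π τ) (stdWord u r) = wordVal (extVal π τ) (stdWord u' r')) :
    u = u' ∧ r = r' := by
  rw [wordVal_std π τ h1, wordVal_std π τ h1] at h
  obtain rfl := tau_eq hτ (SetLike.coe_mem _) (SetLike.coe_mem _) h
  have h' : wordVal π u = wordVal π u' := Subtype.ext (mul_right_cancel h)
  exact ⟨(hst.nf (wordVal π u')).unique ⟨hu, h'⟩ ⟨hu', rfl⟩, rfl⟩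

theorem std_mem_iff (h1 : τ none = 1) (hτ : ∀ g, ∃! r, g * (τ r)⁻¹ ∈ H) (u : List A)
    (r : Option T) : wordVal (extVal π τ) (stdWord u r) ∈ H ↔ r = none := by
  rw [wordVal_std π τ h1, H.mul_mem_cancel_left (SetLike.coe_mem _)]
  cases r with
  | none => simp [h1]
  | some q => simpa using tau_notMem h1 hτ q

theorem ext_gen (hst : IsStacking H π inv st) (h1 : τ none = 1)
    (hτ : ∀ g, ∃! r, g * (τ r)⁻¹ ∈ H) : IsInvGenSet G (extVal π τ) (extInv inv) where
  ne_one := by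
    rintro (b | ⟨q, _ | _⟩)
    · simpa [extVal] using hst.gen.ne_one b
    · intro h
      apply tau_notMem h1 hτ q
      simp only [extVal, inv_eq_one] at h
      rw [h]; exact H.one_mem
    · intro h
      apply tau_notMem h1 hτ q
      simp only [extVal] at h
      rw [h]; exact H.one_mem
  inv_invol := by
    rintro (b | ⟨q, s⟩)
    · simp [extInv, hst.gen.inv_invol]
    · simp [extInv]
  val_inv := by
    rintro (b | ⟨q, _ | _⟩)
    · simp [extInv, extVal, hst.gen.val_inv]
    · simp [extInv, extVal]
    · simp [extInv, extVal]
  gen := by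
    rw [eq_top_iff]
    rintro g -
    obtain ⟨p, -, rfl⟩ := exists_std hst h1 hτ g
    apply Subgroup.list_prod_mem
    intro x hx
    obtain ⟨a, -, rfl⟩ := List.mem_map.1 hx
    exact Subgroup.subset_closure ⟨a, rfl⟩

theorem stdWord_snoc (u : List A) (b : A) :
    stdWord (T := T) u none ++ [.inl b] = stdWord (u ++ [b]) none := by
  simp [stdWord, tailWord]

theorem stdWord_none_snoc (u : List A) (q : T) :
    stdWord u none ++ [.inr (q, true)] = stdWord u (some q) := by
  simp [stdWord, tailWord]

theorem stdWord_none_ne (u : List A) (y : List (ExtLetter A T)) (p : T × Bool) :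
    stdWord u none ≠ y ++ [.inr p] := by
  intro h
  have : (Sum.inr p : ExtLetter A T) ∈ stdWord u none := by rw [h]; simp
  simp [stdWord, tailWord] at this

theorem snoc_mem_extN {y : List (ExtLetter A T)} {a : ExtLetter A T} {N : Set (List A)}
    (h : y ++ [a] ∈ extN T N) :
    (∃ u b, y = stdWord u none ∧ a = .inl b ∧ u ++ [b] ∈ N) ∨
      ∃ u q, y = stdWord u none ∧ a = .inr (q, true) ∧ u ∈ N := by
  obtain ⟨u, hu, _ | q, e⟩ := h
  · left
    rcases List.eq_nil_or_concat u with rfl | ⟨u, b, rfl⟩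
    · simp [stdWord, tailWord] at e
    · rw [List.concat_eq_append] at e hu
      rw [← stdWord_snoc] at e
      obtain ⟨e1, e2⟩ := List.append_inj' e rfl
      exact ⟨u, b, e1, by simpa using e2, hu⟩
  · right
    rw [← stdWord_none_snoc] at e
    obtain ⟨e1, e2⟩ := List.append_inj' e rfl
    exact ⟨u, q, e1, by simpa using e2, hu⟩

/-- Non-degeneracy of a pair in the sense of the termination axiom. -/
def NonDeg {α : Type} (N : Set (List α)) (inv : α → α) (y : List α) (a : α) : Prop :=
  y ++ [a] ∉ N ∧ ¬ ∃ y', y = y' ++ [inv a]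

/-- Reading a standard word at an element of `H`, every non-degenerate pair that is met lies in
`N_H × A`: the only other letter is the last one, and appending it gives a normal form. -/
theorem std_step (h1 : τ none = 1)
    (hτ : ∀ g, ∃! r, g * (τ r)⁻¹ ∈ H) {g : G} (hg : g ∈ H) {w : List A} {r : Option T}
    {U U' y : List (ExtLetter A T)} {a : ExtLetter A T} (e : stdWord w r = U ++ a :: U')
    (hy : y ∈ extN T st.N) (hv : wordVal (extVal π τ) y = g * wordVal (extVal π τ) U)
    (hnd : NonDeg (extN T st.N) (extInv inv) y a) :
    ∃ u ∈ st.N, ∃ b, y = stdWord u none ∧ a = .inl b := by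
  obtain ⟨u, hu, r', rfl⟩ := hy
  have key : ∃ w1 : List A, U = w1.map .inl ∧ ((∃ b, a = .inl b) ∨ ∃ q, a = .inr (q, true)) := by
    rw [stdWord, List.append_eq_append_iff] at e
    rcases e with ⟨as, e1, e2⟩ | ⟨bs, e1, e2⟩
    · cases r with
      | none => simp [tailWord] at e2
      | some q =>
        cases as with
        | nil =>
          simp only [tailWord, List.nil_append, List.cons.injEq] at e2
          exact ⟨w, by simpa using e1, Or.inr ⟨q, e2.1.symm⟩⟩
        | cons c as => simp [tailWord] at e2
    · obtain ⟨w1, w2, rfl, e3, e4⟩ := List.map_eq_append_iff.1 e1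
      refine ⟨w1, e3.symm, ?_⟩
      cases w2 with
      | nil =>
        simp only [List.map_nil] at e4
        subst e4
        cases r with
        | none => simp [tailWord] at e2
        | some q =>
          simp only [tailWord, List.nil_append, List.cons.injEq] at e2
          exact Or.inr ⟨q, e2.1⟩
      | cons c w2 =>
        subst e4
        simp only [List.map_cons, List.cons_append, List.cons.injEq] at e2
        exact Or.inl ⟨c, e2.1⟩
  obtain ⟨w1, rfl, ha⟩ := key
  have hr : r' = none := by
    rw [← std_mem_iff (π := π) h1 hτ u r', hv, wordVal_lift]
    exact H.mul_mem hg (SetLike.coe_mem _)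
  subst hr
  rcases ha with ⟨b, rfl⟩ | ⟨q, rfl⟩
  · exact ⟨u, hu, b, rfl, rfl⟩
  · exact absurd ⟨u, hu, some q, stdWord_none_snoc u q⟩ hnd.1

/-- The termination axiom. The hypotheses say that `W0 q` is a standard word and that, for
`a ≠ t_q⁻¹`, `W1 q a` is the letter `t_q⁻¹` followed by a standard word. -/
theorem ext_F3 (hst : IsStacking H π inv st) (h1 : τ none = 1)
    (hτ : ∀ g, ∃! r, g * (τ r)⁻¹ ∈ H)
    {W0 : T → List (ExtLetter A T)} {W1 : T → ExtLetter A T → List (ExtLetter A T)}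
    (hW0 : ∀ q, ∃ w r, W0 q = stdWord w r)
    (hW1 : ∀ q a, a ≠ .inr (q, false) → ∃ w r, W1 q a = .inr (q, false) :: stdWord w r) :
    ¬ ∃ seq : ℕ → List (ExtLetter A T) × ExtLetter A T,
      ∀ i : ℕ, (seq i).1 ∈ extN T st.N ∧ (seq i).1 ++ [(seq i).2] ∉ extN T st.N ∧
        (¬ ∃ y', (seq i).1 = y' ++ [extInv inv (seq i).2]) ∧
        ∃ u u' : List (ExtLetter A T), extPhi st.phi W0 W1 (seq i).1 (seq i).2
            = u ++ (seq (i+1)).2 :: u' ∧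
          (seq (i+1)).1 ∈ extN T st.N ∧
          wordVal (extVal π τ) ((seq (i+1)).1) = wordVal (extVal π τ) ((seq i).1 ++ u) := by
  rintro ⟨seq, hseq⟩
  have step : ∀ i, ∃ u ∈ st.N, ∃ b, (seq (i+1)).1 = stdWord u none ∧ (seq (i+1)).2 = .inl b := by
    intro i
    obtain ⟨⟨u, hu, r, hy⟩, hn1, hn2, U, U', e, hN', hv⟩ := hseq i
    have hnd : NonDeg (extN T st.N) (extInv inv) (seq (i+1)).1 (seq (i+1)).2 :=
      ⟨(hseq (i+1)).2.1, (hseq (i+1)).2.2.1⟩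
    generalize (seq (i+1)).1 = y' at *
    generalize (seq (i+1)).2 = a' at *
    generalize (seq i).2 = a at *
    rw [hy] at hn1 hn2 e hv
    rw [wordVal_append] at hv
    cases r with
    | none =>
      have hH := (std_mem_iff (π := π) h1 hτ u none).2 rfl
      rw [extPhi_none] at e
      rcases a with b | ⟨q, _ | _⟩
      · refine std_step h1 hτ hH (w := st.phi u b) (r := none) (U' := U') ?_ hN' hv hnd
        simpa [stdWord, tailWord] using e
      · obtain ⟨w, r, hw⟩ := hW0 q
        exact std_step h1 hτ hH (hw.symm.trans e) hN' hv hnd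
      · exact absurd ⟨u, hu, some q, stdWord_none_snoc u q⟩ hn1
    | some q =>
      rw [extPhi_some] at e
      have ha : a ≠ .inr (q, false) := by
        rintro rfl
        exact hn2 ⟨stdWord u none, (stdWord_none_snoc u q).symm⟩
      obtain ⟨w, r, hw⟩ := hW1 q a ha
      rw [hw] at e
      cases U with
      | nil =>
        simp only [List.nil_append, List.cons.injEq] at e
        obtain ⟨u', hu', r', rfl⟩ := hN'
        rw [show wordVal (extVal π τ) [] = 1 from rfl, mul_one] at hv
        obtain ⟨rfl, rfl⟩ := std_unique hst h1 hτ hu' hu hv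
        exact absurd ⟨stdWord u' none, by rw [← e.1]; exact (stdWord_none_snoc u' q).symm⟩ hnd.2
      | cons c U =>
        simp only [List.cons_append, List.cons.injEq] at e
        obtain ⟨rfl, e⟩ := e
        rw [wordVal_cons, wordVal_std π τ h1] at hv
        refine std_step (π := π) h1 hτ (SetLike.coe_mem (wordVal π u)) e hN' ?_ hnd
        rw [hv]
        simp [extVal, mul_assoc]
  choose u hu b hub hbb using step
  refine hst.F3 ⟨fun i => (u i, b i), fun i => ⟨hu i, ?_, ?_, ?_⟩⟩
  · intro h
    refine (hseq (i+1)).2.1 ⟨u i ++ [b i], h, none, ?_⟩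
    rw [hub, hbb, stdWord_snoc]
  · rintro ⟨y', h⟩
    refine (hseq (i+1)).2.2.1 ⟨stdWord y' none, ?_⟩
    simp only at h
    rw [hub, hbb, h, extInv, stdWord_snoc]
  · obtain ⟨-, -, -, U, U', e, -, hv⟩ := hseq (i+1)
    rw [hub, hbb, hbb, extPhi_none] at e
    simp only at e
    obtain ⟨U0, l, e0, rfl, e2⟩ := List.map_eq_append_iff.1 e
    obtain ⟨c, l', rfl, hc, -⟩ := List.map_eq_cons_iff.1 e2
    obtain rfl : c = b (i+1) := by simpa using hc
    refine ⟨U0, l', e0, hu (i+1), ?_⟩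
    rw [hub, hub, wordVal_append, wordVal_lift, wordVal_std π τ h1, wordVal_std π τ h1, h1] at hv
    rw [wordVal_append]
    apply Subtype.ext
    simpa using hv

end Ext

/-! ### The regularity axioms for the extension -/

theorem reg_extN {A T : Type} [Finite T] {N : Set (List A)} (h : IsRegularLang N) :
    IsRegularLang (extN T N) := by
  have h0 : IsRegularLang (List.map (Sum.inl : A → ExtLetter A T) '' N) :=
    reg_map _ Sum.inl_injective h
  convert reg_union h0 (reg_iUnion _ fun q : T => reg_snoc (Sum.inr (q, true)) h0) using 1
  ext y
  constructor
  · rintro ⟨u, hu, _ | q, rfl⟩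
    · left; exact ⟨u, hu, by simp [stdWord, tailWord]⟩
    · right; exact Set.mem_iUnion.2 ⟨q, _, ⟨u, hu, rfl⟩, rfl⟩
  · rintro (⟨u, hu, rfl⟩ | hy)
    · exact ⟨u, hu, none, by simp [stdWord, tailWord]⟩
    · obtain ⟨q, _, ⟨u, hu, rfl⟩, rfl⟩ := Set.mem_iUnion.1 hy
      exact ⟨u, hu, some q, rfl⟩

theorem reg_graph {A T : Type} [Finite A] [Finite T] {st : StackingData A} (h : st.IsAuto)
    (W0 : T → List (ExtLetter A T)) (W1 : T → ExtLetter A T → List (ExtLetter A T)) :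
    SyncRegular3 {t : List (ExtLetter A T) × List (ExtLetter A T) × List (ExtLetter A T) |
      ∃ y ∈ extN T st.N, ∃ a, t = (y, [a], extPhi st.phi W0 W1 y a)} := by
  have h0 : IsRegularLang (List.map (Sum.inl : A → ExtLetter A T) '' st.N) :=
    reg_map _ Sum.inl_injective h.1
  have pad : ∀ (L : Set (List (ExtLetter A T))) (v w : List (ExtLetter A T)), IsRegularLang L →
      IsRegularLang (padWord3 '' ((fun y => (y, v, w)) '' L)) := fun L v w =>
    reg_pad (max v.length w.length) L v w (le_max_left _ _) (le_max_right _ _)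
  have hinj : Function.Injective (Option.map (Sum.inl : A → ExtLetter A T)) :=
    Option.map_injective Sum.inl_injective
  have r1 := reg_map _ (hinj.prodMap (hinj.prodMap hinj)) h.2
  have r2 := reg_iUnion _ fun q : T => pad _ [.inr (q, true)] [.inr (q, true)] h0
  have r3 := reg_iUnion _ fun q : T => pad _ [.inr (q, false)] (W0 q) h0
  have r4 := reg_iUnion _ fun p : T × ExtLetter A T =>
    pad _ [p.2] (W1 p.1 p.2) (reg_snoc (Sum.inr (p.1, true)) h0)
  unfold SyncRegular3
  convert reg_union (reg_union r1 r2) (reg_union r3 r4) using 1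
  have hs : ∀ u : List A, List.map (Sum.inl : A → ExtLetter A T) u = stdWord u none := by
    intro u; simp [stdWord, tailWord]
  ext z
  constructor
  · rintro ⟨_, ⟨y, ⟨u, hu, _ | q, rfl⟩, a, rfl⟩, rfl⟩
    · rw [extPhi_none]
      rcases a with b | ⟨q, _ | _⟩
      · left; left
        refine ⟨_, ⟨_, ⟨u, hu, b, rfl⟩, rfl⟩, ?_⟩
        rw [← padWord3_map, hs u]
        simp
      · right; left
        exact Set.mem_iUnion.2 ⟨q, _, ⟨_, ⟨u, hu, rfl⟩, rfl⟩, by rw [hs]⟩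
      · left; right
        exact Set.mem_iUnion.2 ⟨q, _, ⟨_, ⟨u, hu, rfl⟩, rfl⟩, by rw [hs]⟩
    · rw [extPhi_some]
      right; right
      exact Set.mem_iUnion.2 ⟨(q, a), _, ⟨_, ⟨_, ⟨u, hu, rfl⟩, rfl⟩, rfl⟩, rfl⟩
  · rintro ((⟨_, ⟨_, ⟨u, hu, b, rfl⟩, rfl⟩, rfl⟩ | hz) | hz | hz)
    · refine ⟨_, ⟨_, ⟨u, hu, none, rfl⟩, .inl b, rfl⟩, ?_⟩
      rw [extPhi_none, ← padWord3_map, hs u]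
      simp
    · obtain ⟨q, _, ⟨_, ⟨u, hu, rfl⟩, rfl⟩, rfl⟩ := Set.mem_iUnion.1 hz
      exact ⟨_, ⟨_, ⟨u, hu, none, rfl⟩, .inr (q, true), rfl⟩, by rw [extPhi_none, hs]⟩
    · obtain ⟨q, _, ⟨_, ⟨u, hu, rfl⟩, rfl⟩, rfl⟩ := Set.mem_iUnion.1 hz
      exact ⟨_, ⟨_, ⟨u, hu, none, rfl⟩, .inr (q, false), rfl⟩, by rw [extPhi_none, hs]⟩
    · obtain ⟨⟨q, a⟩, _, ⟨_, ⟨_, ⟨u, hu, rfl⟩, rfl⟩, rfl⟩, rfl⟩ := Set.mem_iUnion.1 hz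
      exact ⟨_, ⟨_, ⟨u, hu, some q, rfl⟩, a, rfl⟩, by rw [extPhi_some]; rfl⟩

/-! ### The extension theorem -/

/-- **Theorem (finite index supergroups).** Let `H` be an autostackable group and let
`G` be a group containing `H` as a subgroup of finite index.  Then `G` is autostackable
respecting `H`. -/
theorem finite_index_supergroup_autostackable_respecting
    {G : Type} [Group G] (H : Subgroup G)
    (hH : Autostackable ↥H) (hfi : H.FiniteIndex) :
    AutostackableRespecting G H := by
  classical
  obtain ⟨A, _, π, inv, st, hst, hauto⟩ := hH
  obtain ⟨T, _, τ, h1, hτ⟩ := exists_transversal H hfi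
  choose S hSN hS using exists_std hst h1 hτ
  let W0 : T → List (ExtLetter A T) := fun q =>
    stdWord (S (τ (some q))⁻¹).1 (S (τ (some q))⁻¹).2
  let W1 : T → ExtLetter A T → List (ExtLetter A T) := fun q a =>
    if a = .inr (q, false) then [.inr (q, false)] else
      .inr (q, false) :: stdWord (S (τ (some q) * extVal π τ a)).1 (S (τ (some q) * extVal π τ a)).2
  obtain ⟨K0, hK0⟩ := (Set.finite_range fun q => (W0 q).length).bddAbove
  obtain ⟨K1, hK1⟩ := (Set.finite_range fun p : T × ExtLetter A T => (W1 p.1 p.2).length).bddAbove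
  -- The summand `1` bounds the values `φ(y, a) = a`.
  refine ⟨ExtLetter A T, inferInstance, extVal π τ, extInv inv,
    ⟨extN T st.N, st.K + K0 + K1 + 1, extPhi st.phi W0 W1⟩, ?_, ?_, ?_⟩
  · refine ⟨ext_gen hst h1 hτ, ?_, ?_, ?_, ?_, ?_⟩
    · intro g
      refine ⟨_, ⟨⟨(S g).1, hSN g, (S g).2, rfl⟩, hS g⟩, ?_⟩
      rintro _ ⟨⟨u, hu, r, rfl⟩, e⟩
      obtain ⟨rfl, rfl⟩ := std_unique hst h1 hτ hu (hSN g) (e.trans (hS g).symm)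
      rfl
    · rintro _ ⟨u, hu, r, rfl⟩ p ⟨s, e⟩
      -- Either `p` is the whole word, or it is a prefix of the part over the alphabet of `H`.
      have hpre : ∀ p : List (ExtLetter A T), p <+: u.map .inl → p ∈ extN T st.N := by
        rintro p ⟨s, e⟩
        obtain ⟨u1, u2, rfl, rfl, -⟩ := List.map_eq_append_iff.1 e.symm
        exact ⟨u1, hst.prefixClosed _ hu _ ⟨u2, rfl⟩, none, by simp [stdWord, tailWord]⟩
      cases r with
      | none => exact hpre p ⟨s, by simpa [stdWord, tailWord] using e⟩
      | some q =>
        rcases List.eq_nil_or_concat s with rfl | ⟨s, c, rfl⟩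
        · exact ⟨u, hu, some q, by simpa using e⟩
        · rw [List.concat_eq_append, ← List.append_assoc] at e
          obtain ⟨e1, -⟩ := List.append_inj' e rfl
          exact hpre p ⟨s, e1⟩
    · rintro _ ⟨u, hu, r, rfl⟩ a
      cases r with
      | none =>
        simp only [extPhi_none]
        rcases a with b | ⟨q, _ | _⟩
        · obtain ⟨e, hl⟩ := hst.F1 u hu b
          simp only [wordVal_lift, e, List.length_map]
          exact ⟨rfl, by omega⟩
        · have : (W0 q).length ≤ K0 := hK0 ⟨q, rfl⟩
          exact ⟨hS _, by simp only; omega⟩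
        · exact ⟨wordVal_singleton _ _, by simp⟩
      | some q =>
        simp only [extPhi_some]
        have : (W1 q a).length ≤ K1 := hK1 ⟨(q, a), rfl⟩
        refine ⟨?_, by omega⟩
        simp only [W1]
        split_ifs with h
        · rw [h, wordVal_singleton]
        · rw [wordVal_cons, hS]
          simp [extVal]
    · rintro _ ⟨u, hu, r, rfl⟩ a hd
      simp only
      cases r with
      | none =>
        rw [extPhi_none]
        rcases a with b | ⟨q, _ | _⟩
        · have : st.phi u b = [b] := by
            apply hst.F2 u hu
            rcases hd with hd | ⟨y', hd⟩
            · left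
              rcases snoc_mem_extN hd with ⟨u', b', e1, e2, h⟩ | ⟨u', q, e1, e2, h⟩
              · obtain ⟨rfl, -⟩ := stdWord_inj e1
                obtain rfl : b = b' := by simpa using e2
                exact h
              · simp at e2
            · right
              simp only [stdWord, tailWord, List.append_nil, extInv] at hd
              obtain ⟨u1, u2, rfl, -, e⟩ := List.map_eq_append_iff.1 hd
              obtain ⟨c, l, rfl, hc, hl⟩ := List.map_eq_cons_iff.1 e
              obtain rfl : l = [] := by simpa using hl
              obtain rfl : c = inv b := by simpa using hc
              exact ⟨u1, rfl⟩
          simp [this]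
        · exfalso
          rcases hd with hd | ⟨y', hd⟩
          · rcases snoc_mem_extN hd with ⟨u', b', e1, e2, h⟩ | ⟨u', q, e1, e2, h⟩ <;> simp at e2
          · exact stdWord_none_ne _ _ _ hd
        · rfl
      | some q =>
        rw [extPhi_some]
        rcases hd with hd | ⟨y', hd⟩
        · rcases snoc_mem_extN hd with ⟨u', b', e1, e2, h⟩ | ⟨u', q, e1, e2, h⟩ <;>
            simpa using (stdWord_inj e1).2
        · have ha : a = .inr (q, false) := by
            rw [← stdWord_none_snoc] at hd
            obtain ⟨-, e⟩ := List.append_inj' hd rfl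
            rcases a with b | ⟨q', _ | _⟩ <;> simp [extInv] at e ⊢
            exact e.symm
          simp [W1, ha]
    · refine ext_F3 hst h1 hτ (fun q => ⟨_, _, rfl⟩) (fun q a ha => ?_)
      exact ⟨_, _, by simp only [W1, if_neg ha]; rfl⟩
  · exact ⟨reg_extN hauto.1, reg_graph hauto W0 W1⟩
  · refine ⟨Set.range .inl, ?_, ?_, ?_, List.map .inl '' st.N, Set.range tailWord,
      ?_, ?_, ?_, ?_, ?_, ?_, ?_, ?_⟩
    · rintro _ ⟨b, rfl⟩
      exact ⟨inv b, rfl⟩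
    · rintro _ ⟨b, rfl⟩
      exact SetLike.coe_mem (π b)
    · have : extVal π τ '' Set.range Sum.inl = H.subtype '' Set.range π := by
        rw [← Set.range_comp, ← Set.range_comp]
        rfl
      rw [this, ← MonoidHom.map_closure, hst.gen.gen, ← MonoidHom.range_eq_map,
        Subgroup.range_subtype]
    · rintro _ ⟨u, -, rfl⟩ c hc
      obtain ⟨b, -, rfl⟩ := List.mem_map.1 hc
      exact ⟨b, rfl⟩
    · rintro _ ⟨u, hu, rfl⟩ p ⟨s, e⟩
      obtain ⟨u1, u2, rfl, rfl, -⟩ := List.map_eq_append_iff.1 e.symm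
      exact ⟨u1, hst.prefixClosed _ hu _ ⟨u2, rfl⟩, rfl⟩
    · intro h hh
      obtain ⟨u, ⟨hu, e⟩, huniq⟩ := hst.nf ⟨h, hh⟩
      refine ⟨u.map .inl, ⟨⟨u, hu, rfl⟩, by rw [wordVal_lift, e]⟩, ?_⟩
      rintro _ ⟨⟨u', hu', rfl⟩, e'⟩
      rw [wordVal_lift] at e'
      rw [huniq u' ⟨hu', Subtype.ext e'⟩]
    · rintro _ ⟨r, rfl⟩ p hp
      cases r with
      | none => exact ⟨none, (List.prefix_nil.1 hp).symm⟩
      | some q =>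
        obtain ⟨s, e⟩ := hp
        cases p with
        | nil => exact ⟨none, rfl⟩
        | cons c p =>
          simp only [tailWord, List.cons_append, List.cons.injEq, List.append_eq_nil_iff] at e
          obtain ⟨rfl, rfl, rfl⟩ := e
          exact ⟨some q, rfl⟩
    · intro g
      have hsymm : ∀ r, τ r * g⁻¹ ∈ H ↔ g * (τ r)⁻¹ ∈ H := by
        intro r
        rw [← H.inv_mem_iff]
        simp
      obtain ⟨r, hr, huniq⟩ := hτ g
      refine ⟨tailWord r, ⟨⟨r, rfl⟩, ?_⟩, ?_⟩
      · rw [wordVal_tail π τ h1, hsymm]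
        exact hr
      · rintro _ ⟨⟨r', rfl⟩, h⟩
        rw [wordVal_tail π τ h1, hsymm] at h
        rw [huniq r' h]
    · ext y
      constructor
      · rintro ⟨u, hu, r, rfl⟩
        exact ⟨_, ⟨u, hu, rfl⟩, _, ⟨r, rfl⟩, rfl⟩
      · rintro ⟨_, ⟨u, hu, rfl⟩, _, ⟨r, rfl⟩, rfl⟩
        exact ⟨u, hu, r, rfl⟩
    · rintro _ ⟨u, hu, r, rfl⟩ hm _ ⟨b, rfl⟩ c hc
      rw [std_mem_iff h1 hτ] at hm
      subst hm
      simp only [extPhi_none] at hc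
      obtain ⟨b', -, rfl⟩ := List.mem_map.1 hc
      exact ⟨b', rfl⟩
    · rintro a _ ⟨u, hu, r, rfl⟩ _ ⟨u', hu', r', rfl⟩ hn ⟨h, hh, e⟩
      rw [wordVal_std π τ h1, wordVal_std π τ h1, ← mul_assoc] at e
      obtain rfl := tau_eq hτ (SetLike.coe_mem _) (H.mul_mem hh (SetLike.coe_mem _)) e
      rw [std_mem_iff h1 hτ] at hn
      simp only
      cases r' with
      | none =>
        rw [extPhi_none, extPhi_none]
        rcases a with b | ⟨q, _ | _⟩
        · exact absurd ⟨rfl, b, rfl⟩ hn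
        · rfl
        · rfl
      | some q => rw [extPhi_some, extPhi_some]
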